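/- Let P be a preordered set equipped with a sublinear projection ω and let D be any category. Then the interleaving distance d^ω is an extended pseudometric on functors P ⥤ D: for all F, G, H : P ⥤ D one has d^ω(F,F) = 0, d^ω(F,G) = d^ω(G,F), and d^ω(F,H) ≤ d^ω(F,G) + d^ω(G,H). -/

import Mathlib

/-!
The identity translation has weight `0` and interleaves `F` with itself, which gives `d(F, F) = 0`.
Swapping the two natural transformations of a `(Γ, K)`-interleaving of `F` and `G` yields a
`(K, Γ)`-interleaving of `G` and `F` (`Interleaving.symm`), which gives symmetry. A
`(Γ₁, K₁)`-interleaving of `F` and `G` and a `(Γ₂, K₂)`-interleaving of `G` and `H` compose to a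
`(Γ₂ ∘ Γ₁, K₁ ∘ K₂)`-interleaving of `F` and `H` (`Interleaving.trans`): the inner triangle of the
second interleaving collapses to a structure map of `G`, which naturality moves past the first
interleaving, whose own triangle then applies. Subadditivity of `ω` bounds the weights of the two
composites, which gives the triangle inequality.
-/

open CategoryTheory
open scoped NNReal ENNReal

universe v₁ u₁ v₂ u₂

/-- A translation on a preordered set `P`. -/
structure Translation (P : Type*) [Preorder P] where
  toFun : P → P
  mono : Monotone toFun
  le_apply : ∀ x, x ≤ toFun x

namespace Translation

variable {P : Type*} [Preorder P]

/-- The identity translation. -/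
def id (P : Type*) [Preorder P] : Translation P :=
  ⟨fun x => x, monotone_id, fun _ => le_refl _⟩

/-- Composition of translations. -/
def comp (Γ₁ Γ₂ : Translation P) : Translation P :=
  ⟨Γ₁.toFun ∘ Γ₂.toFun, Γ₁.mono.comp Γ₂.mono,
    fun x => (Γ₂.le_apply x).trans (Γ₁.le_apply _)⟩

instance : Preorder (Translation P) where
  le Γ K := ∀ x, Γ.toFun x ≤ K.toFun x
  le_refl Γ x := le_refl _
  le_trans Γ K L h₁ h₂ x := (h₁ x).trans (h₂ x)

/-- A translation, regarded as an endofunctor of `P` viewed as a thin category. -/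
def functor (Γ : Translation P) : P ⥤ P := Γ.mono.functor

end Translation

variable {P : Type*} [Preorder P] {D : Type u₁} [Category.{v₁} D]

/-- A `(Γ,K)`-interleaving between functors `F G : P ⥤ D`. -/
structure Interleaving (Γ K : Translation P) (F G : P ⥤ D) where
  φ : F ⟶ Γ.functor ⋙ G
  ψ : G ⟶ K.functor ⋙ F
  tri₁ : ∀ x : P, φ.app x ≫ ψ.app (Γ.toFun x) =
    F.map (homOfLE ((Γ.le_apply x).trans (K.le_apply _)))
  tri₂ : ∀ x : P, ψ.app x ≫ φ.app (K.toFun x) =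
    G.map (homOfLE ((K.le_apply x).trans (Γ.le_apply _)))

/-- `F` and `G` are `(Γ,K)`-interleaved if a `(Γ,K)`-interleaving exists. -/
def Interleaved (Γ K : Translation P) (F G : P ⥤ D) : Prop :=
  Nonempty (Interleaving Γ K F G)

/-- The interleaving distance associated to a sublinear projection `ω`. -/
noncomputable def dSub (ω : Translation P → ℝ≥0∞) (F G : P ⥤ D) : ℝ≥0∞ :=
  sInf ((fun ε : ℝ≥0 => (ε : ℝ≥0∞)) ''
    {ε : ℝ≥0 | ∃ Γ K : Translation P, ω Γ ≤ (ε : ℝ≥0∞) ∧ ω K ≤ (ε : ℝ≥0∞) ∧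
      Interleaved Γ K F G})

/-- Every functor is `(id, id)`-interleaved with itself. -/
def Interleaving.refl (F : P ⥤ D) :
    Interleaving (Translation.id P) (Translation.id P) F F where
  φ := 𝟙 F
  ψ := 𝟙 F
  tri₁ x := (Category.id_comp _).trans (F.map_id x).symm
  tri₂ x := (Category.id_comp _).trans (F.map_id x).symm

/-- Exchanging the two natural transformations reverses an interleaving. -/
def Interleaving.symm {Γ K : Translation P} {F G : P ⥤ D} (i : Interleaving Γ K F G) :
    Interleaving K Γ G F :=
  ⟨i.ψ, i.φ, i.tri₂, i.tri₁⟩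

/-- One half of a composite interleaving: `F x ⟶ G (Γ₁ x) ⟶ H (Γ₂ (Γ₁ x))`. -/
def shiftComp {Γ₁ Γ₂ : Translation P} {F G H : P ⥤ D} (a : F ⟶ Γ₁.functor ⋙ G)
    (b : G ⟶ Γ₂.functor ⋙ H) : F ⟶ (Γ₂.comp Γ₁).functor ⋙ H where
  app x := a.app x ≫ b.app (Γ₁.toFun x)
  naturality x y f := by
    have h₁ := a.naturality f
    have h₂ := b.naturality (Γ₁.functor.map f)
    -- the codomains agree only up to unfolding the functors, hence the term-mode chain
    exact (Category.assoc _ _ _).symm.trans <|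
      (congrArg (· ≫ b.app (Γ₁.toFun y)) h₁).trans <|
      (Category.assoc _ _ _).trans <|
      (congrArg (a.app x ≫ ·) h₂).trans (Category.assoc _ _ _).symm

/-- The triangle identity for composites; by the symmetry of the definition it is needed only
for one of the two triangles. -/
theorem shiftComp_tri {Γ₁ K₁ Γ₂ K₂ : Translation P} {F G H : P ⥤ D}
    (i : Interleaving Γ₁ K₁ F G) (j : Interleaving Γ₂ K₂ G H) (x : P) :
    (shiftComp i.φ j.φ).app x ≫ (shiftComp j.ψ i.ψ).app ((Γ₂.comp Γ₁).toFun x) =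
      F.map (homOfLE (((Γ₂.comp Γ₁).le_apply x).trans ((K₁.comp K₂).le_apply _))) := by
  have hle : Γ₁.toFun x ≤ K₂.toFun (Γ₂.toFun (Γ₁.toFun x)) :=
    (Γ₂.le_apply _).trans (K₂.le_apply _)
  have hj : j.φ.app (Γ₁.toFun x) ≫ j.ψ.app (Γ₂.toFun (Γ₁.toFun x)) = G.map (homOfLE hle) :=
    j.tri₁ _
  have hn : G.map (homOfLE hle) ≫ i.ψ.app (K₂.toFun (Γ₂.toFun (Γ₁.toFun x))) =
      i.ψ.app (Γ₁.toFun x) ≫ F.map (homOfLE (K₁.mono hle)) := i.ψ.naturality (homOfLE hle)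
  have hi := i.tri₁ x
  change (i.φ.app x ≫ j.φ.app (Γ₁.toFun x)) ≫ j.ψ.app (Γ₂.toFun (Γ₁.toFun x)) ≫
    i.ψ.app (K₂.toFun (Γ₂.toFun (Γ₁.toFun x))) = _
  exact (Category.assoc _ _ _).trans <|
    (congrArg (i.φ.app x ≫ ·) (Category.assoc _ _ _).symm).trans <|
    (congrArg (i.φ.app x ≫ ·)
      ((congrArg (· ≫ i.ψ.app (K₂.toFun (Γ₂.toFun (Γ₁.toFun x)))) hj).trans hn)).trans <|
    (Category.assoc _ _ _).symm.trans <|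
    (congrArg (· ≫ F.map (homOfLE (K₁.mono hle))) hi).trans (F.map_comp _ _).symm

/-- Interleavings compose; the order of composition is reversed between the two translations. -/
def Interleaving.trans {Γ₁ K₁ Γ₂ K₂ : Translation P} {F G H : P ⥤ D}
    (i : Interleaving Γ₁ K₁ F G) (j : Interleaving Γ₂ K₂ G H) :
    Interleaving (Γ₂.comp Γ₁) (K₁.comp K₂) F H where
  φ := shiftComp i.φ j.φ
  ψ := shiftComp j.ψ i.ψ
  tri₁ := shiftComp_tri i j
  tri₂ := shiftComp_tri j.symm i.symm

theorem dSub_le {ω : Translation P → ℝ≥0∞} {F G : P ⥤ D} {ε : ℝ≥0} {Γ K : Translation P}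
    (hΓ : ω Γ ≤ ε) (hK : ω K ≤ ε) (i : Interleaving Γ K F G) : dSub ω F G ≤ ε :=
  sInf_le ⟨ε, ⟨Γ, K, hΓ, hK, ⟨i⟩⟩, rfl⟩

theorem dSub_symm_le (ω : Translation P → ℝ≥0∞) (F G : P ⥤ D) : dSub ω F G ≤ dSub ω G F := by
  refine le_sInf ?_
  rintro _ ⟨ε, ⟨Γ, K, hΓ, hK, ⟨i⟩⟩, rfl⟩
  exact dSub_le hK hΓ i.symm

/-- The interleaving distance of a sublinear projection is an extended
pseudometric on `P ⥤ D`. -/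
theorem dSub_pseudometric {P : Type*} [Preorder P] {D : Type u₁} [Category.{v₁} D]
    (ω : Translation P → ℝ≥0∞)
    (hω0 : ω (Translation.id P) = 0)
    (hωsub : ∀ Γ₁ Γ₂ : Translation P, ω (Γ₁.comp Γ₂) ≤ ω Γ₁ + ω Γ₂)
    (F G H : P ⥤ D) :
    dSub ω F F = 0 ∧ dSub ω F G = dSub ω G F ∧ dSub ω F H ≤ dSub ω F G + dSub ω G H := by
  refine ⟨?_, le_antisymm (dSub_symm_le ω F G) (dSub_symm_le ω G F), ?_⟩
  · have h : dSub ω F F ≤ ((0 : ℝ≥0) : ℝ≥0∞) :=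
      dSub_le (by simp [hω0]) (by simp [hω0]) (Interleaving.refl F)
    simpa using h
  · conv_rhs => rw [dSub, dSub, ENNReal.sInf_add]
    refine le_iInf₂ ?_
    rintro _ ⟨ε, ⟨Γ₁, K₁, hΓ₁, hK₁, ⟨i⟩⟩, rfl⟩
    rw [ENNReal.add_sInf]
    refine le_iInf₂ ?_
    rintro _ ⟨δ, ⟨Γ₂, K₂, hΓ₂, hK₂, ⟨j⟩⟩, rfl⟩
    have h : dSub ω F H ≤ ((ε + δ : ℝ≥0) : ℝ≥0∞) := by
      refine dSub_le ?_ ?_ (i.trans j)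
      · rw [ENNReal.coe_add, add_comm]
        exact (hωsub _ _).trans (add_le_add hΓ₂ hΓ₁)
      · rw [ENNReal.coe_add]
        exact (hωsub _ _).trans (add_le_add hK₁ hK₂)
    simpa using h
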